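/- arXiv:1611.05285 — 2 statements merged into one kernel-verified Lean document; each statement's English description precedes it below -/
import Mathlib

section
/- Let α ∈ (−1/2, 1/2) and k ∈ (−cos(πα), cos(πα)) with (α, k) ≠ (0, 0). Set s₁ = −sin(πα) − ik, ν = −(1/(2πi))·ln(cos²(πα) − k²) (purely imaginary), d = (1/√π)·√(−ln(cos²(πα) − k²)), and φ = −(3/2)d²·ln 2 + arg Γ((i/2)d²) − π/4 − arg(−sin(πα) − ik). Then for every y > 0: 2·Re[ (√π·e^{−iπν/2}/(s₁·Γ(ν)))·exp( i(2/3)y^{3/2} + ν·ln(8y^{3/2}) − iπ/4 ) ] = d·cos( (2/3)y^{3/2} − (3/4)d²·ln(y) + φ ). -/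
/- STATEMENT 14: the trigonometric identity converting the Riemann–Hilbert asymptotic
expression into the cosine form of the real Ablowitz–Segur connection formulas. -/

open Complex

noncomputable section

/-- `|Γ(it)|² t sinh(πt) = π` for `t ≠ 0`. -/
theorem norm_Gamma_imag (t : ℝ) (ht : 0 < t) :
    ‖Complex.Gamma (Complex.I * (t : ℂ))‖ ^ 2 * (t * Real.sinh (Real.pi * t)) = Real.pi := by
  have hz : (Complex.I * (t : ℂ)) ≠ 0 :=
    mul_ne_zero Complex.I_ne_zero (by exact_mod_cast ht.ne')
  have h := Complex.Gamma_mul_Gamma_one_sub (Complex.I * (t : ℂ))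
  have hc : (starRingEnd ℂ) (Complex.I * (t : ℂ)) = -(Complex.I * (t : ℂ)) := by simp
  have h1 : Complex.Gamma (1 - Complex.I * (t : ℂ)) =
      -(Complex.I * (t : ℂ)) * (starRingEnd ℂ) (Complex.Gamma (Complex.I * (t : ℂ))) := by
    rw [← Complex.Gamma_conj, hc, ← Complex.Gamma_add_one _ (neg_ne_zero.mpr hz)]
    congr 1; ring
  have h2 : Complex.sin ((Real.pi : ℂ) * (Complex.I * (t : ℂ))) =
      ((Real.sinh (Real.pi * t) : ℝ) : ℂ) * Complex.I := by
    rw [show (Real.pi : ℂ) * (Complex.I * (t : ℂ)) = ((Real.pi * t : ℝ) : ℂ) * Complex.I by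
      push_cast; ring, Complex.sin_mul_I, Complex.ofReal_sinh]
  have hs : 0 < Real.sinh (Real.pi * t) := Real.sinh_pos_iff.mpr (by positivity)
  have hs' : ((Real.sinh (Real.pi * t) : ℝ) : ℂ) ≠ 0 := by exact_mod_cast hs.ne'
  rw [h1, h2, eq_div_iff (mul_ne_zero hs' Complex.I_ne_zero)] at h
  have h3 := Complex.mul_conj' (Complex.Gamma (Complex.I * (t : ℂ)))
  have : ((‖Complex.Gamma (Complex.I * (t : ℂ))‖ ^ 2 * (t * Real.sinh (Real.pi * t)) : ℝ) : ℂ)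
      = (Real.pi : ℂ) := by
    rw [Complex.ofReal_mul, Complex.ofReal_pow, Complex.ofReal_mul, ← h3]
    linear_combination h + (Complex.Gamma (Complex.I * (t : ℂ))) *
      (starRingEnd ℂ) (Complex.Gamma (Complex.I * (t : ℂ))) * t *
      ((Real.sinh (Real.pi * t) : ℝ) : ℂ) * Complex.I_mul_I
  exact_mod_cast this

/-- Let α ∈ (−1/2, 1/2), k ∈ (−cos πα, cos πα), (α,k) ≠ (0,0), s₁ = −sin(πα) − ik,
ν = −(1/(2πi))ln(cos²(πα) − k²), d = (1/√π)√(−ln(cos²(πα) − k²)) and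
φ = −(3/2)d²ln2 + arg Γ((i/2)d²) − π/4 − arg(−sin(πα) − ik). Then for every y > 0,
2·Re[ (√π e^{−iπν/2}/(s₁Γ(ν)))·e^{ i(2/3)y^{3/2} + ν ln(8y^{3/2}) − iπ/4 } ]
  = d·cos( (2/3)y^{3/2} − (3/4)d²·ln y + φ ). -/
theorem real_AS_connection_identity (α k : ℝ)
    (hα : -1/2 < α ∧ α < 1/2)
    (hk : -Real.cos (Real.pi * α) < k ∧ k < Real.cos (Real.pi * α))
    (hne : ¬(α = 0 ∧ k = 0))
    (s₁ : ℂ) (hs₁ : s₁ = -(Real.sin (Real.pi * α) : ℂ) - Complex.I * (k : ℂ))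
    (ν : ℂ) (hν : ν = -(1 / (2 * (Real.pi : ℂ) * Complex.I)) *
      ((Real.log (Real.cos (Real.pi * α) ^ 2 - k ^ 2) : ℝ) : ℂ))
    (d φ : ℝ)
    (hd : d = (1 / Real.sqrt Real.pi) *
      Real.sqrt (-Real.log (Real.cos (Real.pi * α) ^ 2 - k ^ 2)))
    (hφ : φ = -(3/2) * d ^ 2 * Real.log 2 +
      Complex.arg (Complex.Gamma (Complex.I / 2 * (d : ℂ) ^ 2)) - Real.pi / 4 -
      Complex.arg (-(Real.sin (Real.pi * α) : ℂ) - Complex.I * (k : ℂ))) :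
    ∀ y : ℝ, 0 < y →
      2 * (((Real.sqrt Real.pi : ℂ) * Complex.exp (-(Complex.I * (Real.pi : ℂ) * ν) / 2) /
          (s₁ * Complex.Gamma ν) *
          Complex.exp (Complex.I * (2/3) * ((y ^ ((3:ℝ)/2) : ℝ) : ℂ)
            + ν * ((Real.log (8 * y ^ ((3:ℝ)/2)) : ℝ) : ℂ)
            - Complex.I * (Real.pi : ℂ) / 4)).re) =
        d * Real.cos ((2/3) * y ^ ((3:ℝ)/2) - (3/4) * d ^ 2 * Real.log y + φ) := by
  intro y hy
  have hpi := Real.pi_pos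
  have hspi : 0 < Real.sqrt Real.pi := Real.sqrt_pos.mpr hpi
  set c := Real.cos (Real.pi * α) with hc
  set σ := Real.sin (Real.pi * α) with hσ
  have hcs : σ ^ 2 + c ^ 2 = 1 := Real.sin_sq_add_cos_sq _
  have hu0 : 0 < c ^ 2 - k ^ 2 := by nlinarith [hk.1, hk.2]
  have hsk : 0 < σ ^ 2 + k ^ 2 := by
    by_contra hcon
    have hσ0 : σ = 0 := by nlinarith [sq_nonneg σ, sq_nonneg k]
    have hk0 : k = 0 := by nlinarith [sq_nonneg σ, sq_nonneg k]
    refine hne ⟨?_, hk0⟩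
    have := (Real.sin_eq_zero_iff_of_lt_of_lt (x := Real.pi * α)
      (by nlinarith [hα.1, hα.2]) (by nlinarith [hα.1, hα.2])).mp hσ0
    rcases mul_eq_zero.mp this with h | h
    · exact absurd h hpi.ne'
    · exact h
  have hu1 : c ^ 2 - k ^ 2 < 1 := by nlinarith
  have hL : Real.log (c ^ 2 - k ^ 2) < 0 := Real.log_neg hu0 hu1
  have hdpos : 0 < d := by
    rw [hd]; exact mul_pos (by positivity) (Real.sqrt_pos.mpr (by linarith))
  have hd2 : Real.log (c ^ 2 - k ^ 2) = -(Real.pi * d ^ 2) := by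
    rw [hd, mul_pow, div_pow, Real.sq_sqrt hpi.le, Real.sq_sqrt (by linarith)]
    field_simp
  obtain ⟨t, htd⟩ : ∃ t : ℝ, t = d ^ 2 / 2 := ⟨_, rfl⟩
  have ht : 0 < t := by rw [htd]; positivity
  have hd2t : d ^ 2 = 2 * t := by rw [htd]; ring
  have hu : c ^ 2 - k ^ 2 = Real.exp (-(Real.pi * (2 * t))) := by
    rw [← hd2t, ← hd2, Real.exp_log hu0]
  have hpic : (Real.pi : ℂ) ≠ 0 := by exact_mod_cast hpi.ne'
  have hν' : ν = -(Complex.I * (t : ℂ)) := by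
    rw [hν, hd2, hd2t]
    push_cast
    field_simp
    linear_combination (t : ℂ) * Complex.I_sq
  have hG := norm_Gamma_imag t ht
  have harg : Complex.I / 2 * (d : ℂ) ^ 2 = Complex.I * (t : ℂ) := by
    have : ((d : ℂ)) ^ 2 = 2 * (t : ℂ) := by exact_mod_cast hd2t
    rw [this]; ring
  rw [harg, ← hs₁] at hφ
  have hGν : Complex.Gamma ν = (starRingEnd ℂ) (Complex.Gamma (Complex.I * (t : ℂ))) := by
    rw [← Complex.Gamma_conj, hν']; simp
  set G := Complex.Gamma (Complex.I * (t : ℂ)) with hGdef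
  have hGn : 0 < ‖G‖ := by
    rcases (norm_nonneg G).eq_or_lt with h | h
    · rw [← h] at hG; simp at hG; exact absurd hG.symm hpi.ne'
    · exact h
  have hs1n : ‖s₁‖ ^ 2 = σ ^ 2 + k ^ 2 := by
    rw [← Complex.normSq_eq_norm_sq, hs₁, Complex.normSq_apply]; simp; ring
  have hs1p : 0 < ‖s₁‖ := by
    rcases (norm_nonneg s₁).eq_or_lt with h | h
    · rw [← h] at hs1n; simp at hs1n; linarith
    · exact h
  have hGpol : Complex.Gamma ν = (‖G‖ : ℂ) * Complex.exp (-((G.arg : ℂ) * Complex.I)) := by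
    rw [hGν]
    conv_lhs => rw [← Complex.norm_mul_exp_arg_mul_I G]
    rw [map_mul, Complex.conj_ofReal, ← Complex.exp_conj]
    simp
  have hspol : s₁ = (‖s₁‖ : ℂ) * Complex.exp ((s₁.arg : ℂ) * Complex.I) :=
    (Complex.norm_mul_exp_arg_mul_I s₁).symm
  -- the modulus
  have hR : Real.sqrt Real.pi * Real.exp (-(Real.pi * t) / 2) / (‖s₁‖ * ‖G‖) = d / 2 := by
    have hnn : 0 ≤ Real.sqrt Real.pi * Real.exp (-(Real.pi * t) / 2) / (‖s₁‖ * ‖G‖) := by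
      positivity
    refine (pow_left_inj₀ hnn (by positivity) two_ne_zero).mp ?_
    rw [div_pow, mul_pow, mul_pow, Real.sq_sqrt hpi.le, div_pow, hd2t, hs1n,
      div_eq_div_iff (by positivity) (by norm_num)]
    have e1 : Real.exp (-(Real.pi * t) / 2) ^ 2 = Real.exp (-(Real.pi * t)) := by
      rw [← Real.exp_nat_mul]; congr 1; push_cast; ring
    have e2 : σ ^ 2 + k ^ 2 = 1 - Real.exp (-(Real.pi * t)) ^ 2 := by
      have : Real.exp (-(Real.pi * t)) ^ 2 = Real.exp (-(Real.pi * (2 * t))) := by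
        rw [← Real.exp_nat_mul]; congr 1; push_cast; ring
      rw [this, ← hu]; linarith
    have e3 : Real.exp (-(Real.pi * t)) * Real.exp (Real.pi * t) = 1 := by
      rw [← Real.exp_add]; simp
    rw [Real.sinh_eq] at hG
    rw [e1, e2]
    linear_combination (-4 * Real.exp (-(Real.pi * t))) * hG + 2 * t * ‖G‖ ^ 2 * e3
  have hlog : Real.log (8 * y ^ ((3:ℝ)/2)) = 3 * Real.log 2 + 3 / 2 * Real.log y := by
    rw [Real.log_mul (by norm_num) (by positivity), Real.log_rpow hy,
      show (8:ℝ) = 2 ^ 3 by norm_num, Real.log_pow]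
    push_cast; ring
  set Y := y ^ ((3:ℝ)/2) with hY
  set θ := (2/3) * Y - (3/4) * d ^ 2 * Real.log y + φ with hθ
  have key : (Real.sqrt Real.pi : ℂ) * Complex.exp (-(Complex.I * (Real.pi : ℂ) * ν) / 2) /
          (s₁ * Complex.Gamma ν) *
          Complex.exp (Complex.I * (2/3) * (Y : ℂ)
            + ν * ((Real.log (8 * Y) : ℝ) : ℂ)
            - Complex.I * (Real.pi : ℂ) / 4) =
      ((d / 2 : ℝ) : ℂ) * Complex.exp ((θ : ℂ) * Complex.I) := by
    have f1 : Complex.exp (-(Complex.I * (Real.pi : ℂ) * ν) / 2) =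
        ((Real.exp (-(Real.pi * t) / 2) : ℝ) : ℂ) := by
      rw [Complex.ofReal_exp, hν']; congr 1; push_cast
      linear_combination (Real.pi * t / 2 : ℂ) * Complex.I_sq
    have f2 : Complex.exp (Complex.I * (2/3) * (Y : ℂ) + ν * ((Real.log (8 * Y) : ℝ) : ℂ)
            - Complex.I * (Real.pi : ℂ) / 4) =
        Complex.exp ((θ : ℂ) * Complex.I) * (Complex.exp ((s₁.arg : ℂ) * Complex.I) *
          Complex.exp (-((G.arg : ℂ) * Complex.I))) := by
      rw [← Complex.exp_add, ← Complex.exp_add, hlog, hν', hθ, hφ, hd2t]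
      congr 1; push_cast; ring
    have n1 : (‖s₁‖ : ℂ) ≠ 0 := by exact_mod_cast hs1p.ne'
    have n2 : (‖G‖ : ℂ) ≠ 0 := by exact_mod_cast hGn.ne'
    have hsG : s₁ * Complex.Gamma ν = ((‖s₁‖ : ℂ) * (‖G‖ : ℂ)) *
        (Complex.exp ((s₁.arg : ℂ) * Complex.I) * Complex.exp (-((G.arg : ℂ) * Complex.I))) := by
      rw [hGpol]; nth_rewrite 1 [hspol]; ring
    have n3 : Complex.exp ((s₁.arg : ℂ) * Complex.I) *
        Complex.exp (-((G.arg : ℂ) * Complex.I)) ≠ 0 :=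
      mul_ne_zero (Complex.exp_ne_zero _) (Complex.exp_ne_zero _)
    rw [f1, f2, hsG, ← hR]
    generalize Complex.exp ((s₁.arg : ℂ) * Complex.I) *
        Complex.exp (-((G.arg : ℂ) * Complex.I)) = E at n3 ⊢
    rw [Complex.ofReal_div, Complex.ofReal_mul, Complex.ofReal_mul]
    field_simp
  rw [key, Complex.re_ofReal_mul, Complex.exp_ofReal_mul_I_re]
  ring
end
end

section
/- Let a, b ∈ ℝ with (a, b) ≠ (0, 0), and set α = i·a, k = i·b, s₁ = −sin(πα) − ik = b − i·sinh(πa), ν = −(1/(2πi))·ln(cosh²(πa) + b²) (purely imaginary), d = (i/√π)·√(ln(cosh²(πa) + b²)) (purely imaginary, with d² real and nonpositive), and φ = −(3/2)d²·ln 2 + arg Γ((i/2)d²) − π/4 − arg(b − i·sinh(πa)). Then for every y > 0: 2i·Im[ (√π·e^{−iπν/2}/(s₁·Γ(ν)))·exp( i(2/3)y^{3/2} + ν·ln(8y^{3/2}) − iπ/4 ) ] = d·sin( (2/3)y^{3/2} − (3/4)d²·ln(y) + φ ). -/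
/- STATEMENT 15: the trigonometric identity converting the Riemann–Hilbert asymptotic
expression into the sine form of the purely imaginary Ablowitz–Segur connection formulas. -/

open Complex

noncomputable section

/-- Squared modulus of the Gamma function on the imaginary axis. -/
lemma normSq_Gamma_imag (t : ℝ) (ht : 0 < t) :
    ‖Complex.Gamma (-(Complex.I * t))‖ ^ 2 * (t * Real.sinh (Real.pi * t)) = Real.pi := by
  have hsh : 0 < Real.sinh (Real.pi * t) := Real.sinh_pos_iff.mpr (by positivity)
  have h1 := Complex.Gamma_mul_Gamma_one_sub (Complex.I * t)
  have hn : -(Complex.I * (t : ℂ)) ≠ 0 := by simp [ht.ne']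
  have h2 := Complex.Gamma_add_one (-(Complex.I * (t : ℂ))) hn
  have h3 : (1 : ℂ) - Complex.I * t = -(Complex.I * t) + 1 := by ring
  have hc : Complex.Gamma (Complex.I * t) =
      (starRingEnd ℂ) (Complex.Gamma (-(Complex.I * t))) := by
    rw [← Complex.Gamma_conj]; congr 1; simp
  have hs : Complex.sin ((Real.pi : ℂ) * (Complex.I * t)) =
      ((Real.sinh (Real.pi * t) : ℝ) : ℂ) * Complex.I := by
    rw [← mul_assoc, mul_comm (Real.pi : ℂ) Complex.I, mul_assoc, mul_comm Complex.I,
      Complex.sin_mul_I]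
    push_cast; rfl
  have hshc : ((Real.sinh (Real.pi * t) : ℝ) : ℂ) ≠ 0 := by exact_mod_cast hsh.ne'
  rw [h3, h2, hs, hc, eq_div_iff (mul_ne_zero hshc Complex.I_ne_zero)] at h1
  have h4 := Complex.conj_mul' (Complex.Gamma (-(Complex.I * t)))
  have : ((‖Complex.Gamma (-(Complex.I * t))‖ ^ 2 * (t * Real.sinh (Real.pi * t)) : ℝ) : ℂ)
      = (Real.pi : ℂ) := by
    rw [← h1]; push_cast; rw [← h4]
    linear_combination (-(starRingEnd ℂ) (Complex.Gamma (-(Complex.I * t))) *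
      Complex.Gamma (-(Complex.I * t)) * t * Complex.sinh (Real.pi * t)) * -Complex.I_sq
  exact_mod_cast this

/-- Let a, b ∈ ℝ with (a,b) ≠ (0,0), α = ia, k = ib, s₁ = −sin(πα) − ik = b − i·sinh(πa),
ν = −(1/(2πi))ln(cosh²(πa) + b²), d = (i/√π)√(ln(cosh²(πa) + b²)) and
φ = −(3/2)d²ln2 + arg Γ((i/2)d²) − π/4 − arg(b − i·sinh(πa)). Then for every y > 0,
2i·Im[ (√π e^{−iπν/2}/(s₁Γ(ν)))·e^{ i(2/3)y^{3/2} + ν ln(8y^{3/2}) − iπ/4 } ]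
  = d·sin( (2/3)y^{3/2} − (3/4)d²·ln y + φ ). -/
theorem imaginary_AS_connection_identity (a b : ℝ)
    (hne : ¬(a = 0 ∧ b = 0))
    (α k : ℂ) (hα : α = Complex.I * (a : ℂ)) (hk : k = Complex.I * (b : ℂ))
    (s₁ : ℂ) (hs₁ : s₁ = -Complex.sin ((Real.pi : ℂ) * α) - Complex.I * k)
    (ν : ℂ) (hν : ν = -(1 / (2 * (Real.pi : ℂ) * Complex.I)) *
      ((Real.log (Real.cosh (Real.pi * a) ^ 2 + b ^ 2) : ℝ) : ℂ))
    (d φ : ℂ)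
    (hd : d = (Complex.I / (Real.sqrt Real.pi : ℂ)) *
      ((Real.sqrt (Real.log (Real.cosh (Real.pi * a) ^ 2 + b ^ 2)) : ℝ) : ℂ))
    (hφ : φ = -(3/2) * d ^ 2 * ((Real.log 2 : ℝ) : ℂ) +
      ((Complex.arg (Complex.Gamma (Complex.I / 2 * d ^ 2)) : ℝ) : ℂ) - (Real.pi : ℂ) / 4 -
      ((Complex.arg ((b : ℂ) - Complex.I * ((Real.sinh (Real.pi * a) : ℝ) : ℂ)) : ℝ) : ℂ)) :
    ∀ y : ℝ, 0 < y →
      2 * Complex.I * ((((Real.sqrt Real.pi : ℂ) *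
          Complex.exp (-(Complex.I * (Real.pi : ℂ) * ν) / 2) / (s₁ * Complex.Gamma ν) *
          Complex.exp (Complex.I * (2/3) * ((y ^ ((3:ℝ)/2) : ℝ) : ℂ)
            + ν * ((Real.log (8 * y ^ ((3:ℝ)/2)) : ℝ) : ℂ)
            - Complex.I * (Real.pi : ℂ) / 4)).im : ℝ) ) =
        d * Complex.sin ((((2/3) * y ^ ((3:ℝ)/2) : ℝ) : ℂ)
          - (3/4) * d ^ 2 * ((Real.log y : ℝ) : ℂ) + φ) := by
  intro y hy
  have hpi := Real.pi_pos
  set S := Real.sinh (Real.pi * a) with hS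
  have hcosh : Real.cosh (Real.pi * a) ^ 2 = S ^ 2 + 1 := Real.cosh_sq _
  set L := Real.log (Real.cosh (Real.pi * a) ^ 2 + b ^ 2) with hL
  have hSb : 0 < S ^ 2 + b ^ 2 := by
    rcases eq_or_ne b 0 with hb | hb
    · have ha : a ≠ 0 := fun h => hne ⟨h, hb⟩
      have : S ≠ 0 := by
        rw [hS, Ne, Real.sinh_eq_zero]; positivity
      positivity
    · positivity
  have hLpos : 0 < L := Real.log_pos (by rw [hcosh]; linarith)
  have hexpL : Real.exp L = S ^ 2 + 1 + b ^ 2 := by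
    rw [hL, Real.exp_log (by rw [hcosh]; linarith), hcosh]
  obtain ⟨t, ht⟩ : ∃ t : ℝ, t = L / (2 * Real.pi) := ⟨_, rfl⟩
  have htpos : 0 < t := by rw [ht]; positivity
  have hLt : L = 2 * Real.pi * t := by rw [ht]; field_simp
  have hpic : (Real.pi : ℂ) ≠ 0 := by exact_mod_cast hpi.ne'
  have hν' : ν = Complex.I * t := by
    rw [hν, hLt]; push_cast; field_simp; simp
  have hsqpi : ((Real.sqrt Real.pi : ℝ) : ℂ) ^ 2 = Real.pi := by
    exact_mod_cast Real.sq_sqrt hpi.le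
  have hsqL : ((Real.sqrt L : ℝ) : ℂ) ^ 2 = L := by
    exact_mod_cast Real.sq_sqrt hLpos.le
  have hd2 : d ^ 2 = ((-2 * t : ℝ) : ℂ) := by
    rw [hd, mul_pow, div_pow, hsqpi, hsqL, hLt, Complex.I_sq]; push_cast; field_simp
  have hs₁' : s₁ = (b : ℂ) - Complex.I * (S : ℂ) := by
    rw [hs₁, hα, hk, ← mul_assoc, mul_comm (Real.pi : ℂ) Complex.I, mul_assoc,
      mul_comm Complex.I ((Real.pi : ℂ) * a), Complex.sin_mul_I, hS]
    push_cast
    linear_combination (-(b : ℂ)) * Complex.I_sq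
  have hGarg : Complex.I / 2 * d ^ 2 = -(Complex.I * t) := by
    rw [hd2]; push_cast; ring
  rw [hGarg, hd2, ← hs₁'] at hφ
  set G := Complex.Gamma (-(Complex.I * t)) with hG
  have hGam : Complex.Gamma ν = (starRingEnd ℂ) G := by
    rw [hν', hG, ← Complex.Gamma_conj]; congr 1; simp
  have hGn := normSq_Gamma_imag t htpos
  rw [← hG] at hGn
  have hGpos : 0 < ‖G‖ := by
    rw [norm_pos_iff]; intro h; rw [h] at hGn; simp at hGn; exact hpi.ne hGn
  have hsn : ‖s₁‖ ^ 2 = S ^ 2 + b ^ 2 := by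
    rw [hs₁', ← Complex.normSq_eq_norm_sq, Complex.normSq_apply]; simp; ring
  have hspos : 0 < ‖s₁‖ := by
    rcases (norm_nonneg s₁).eq_or_lt with h | h
    · rw [← h] at hsn; norm_num at hsn; linarith
    · exact h
  set θ := Complex.arg s₁ with hθ
  set ψ := Complex.arg G with hψ
  have hspol : s₁ = ‖s₁‖ * Complex.exp (θ * Complex.I) := (Complex.norm_mul_exp_arg_mul_I s₁).symm
  have hGpol : (starRingEnd ℂ) G = ‖G‖ * Complex.exp (-(ψ * Complex.I)) := by
    conv_lhs => rw [← Complex.norm_mul_exp_arg_mul_I G]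
    rw [map_mul, Complex.conj_ofReal, ← Complex.exp_conj]
    simp [hψ]
  have hlog : Real.log (8 * y ^ ((3:ℝ)/2)) = 3 * Real.log 2 + 3 / 2 * Real.log y := by
    rw [Real.log_mul (by norm_num) (Real.rpow_pos_of_pos hy _).ne', Real.log_rpow hy,
      show (8:ℝ) = 2 ^ 3 by norm_num, Real.log_pow]; norm_num
  set Y := y ^ ((3:ℝ)/2) with hY
  obtain ⟨Φ, hΦ⟩ : ∃ Φ : ℝ, Φ = 2 / 3 * Y + t * (3 * Real.log 2 + 3 / 2 * Real.log y)
    - Real.pi / 4 + ψ - θ := ⟨_, rfl⟩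
  obtain ⟨A, hA⟩ : ∃ A : ℝ, A = Real.sqrt Real.pi * Real.exp (Real.pi * t / 2) / (‖s₁‖ * ‖G‖) :=
    ⟨_, rfl⟩
  have hApos : 0 < A := by rw [hA]; positivity
  have hA2 : A ^ 2 = t / 2 := by
    rw [hA, div_pow, mul_pow, mul_pow, Real.sq_sqrt hpi.le, ← Real.exp_nat_mul, hsn,
      div_eq_iff (by positivity)]
    have e1 : Real.exp (Real.pi * t) * Real.sinh (Real.pi * t) = (S ^ 2 + b ^ 2) / 2 := by
      rw [Real.sinh_eq, mul_div_assoc', mul_sub, ← Real.exp_add, ← Real.exp_add,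
        show Real.pi * t + Real.pi * t = L by rw [hLt]; ring, hexpL]
      simp
      ring
    rw [show ((2:ℕ):ℝ) * (Real.pi * t / 2) = Real.pi * t by push_cast; ring]
    linear_combination (-Real.exp (Real.pi * t)) * hGn + (‖G‖ ^ 2 * t) * e1
  have hmain : ((Real.sqrt Real.pi : ℂ) *
          Complex.exp (-(Complex.I * (Real.pi : ℂ) * ν) / 2) / (s₁ * Complex.Gamma ν) *
          Complex.exp (Complex.I * (2/3) * (Y : ℂ)
            + ν * ((Real.log (8 * Y) : ℝ) : ℂ)
            - Complex.I * (Real.pi : ℂ) / 4)) = (A : ℂ) * Complex.exp (Φ * Complex.I) := by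
    rw [hGam, hGpol, hlog, hν']
    conv_lhs => rw [hspol]
    have e2 : Complex.exp (-(Complex.I * (Real.pi : ℂ) * (Complex.I * t)) / 2) =
        Complex.exp (Real.pi * t / 2) := by
      congr 1; linear_combination (-(Real.pi : ℂ) * t / 2) * Complex.I_sq
    have e3 : Complex.exp (Φ * Complex.I) * (Complex.exp (θ * Complex.I) *
        Complex.exp (-(ψ * Complex.I))) = Complex.exp (Complex.I * (2/3) * (Y : ℂ)
            + Complex.I * t * ((3 * Real.log 2 + 3 / 2 * Real.log y : ℝ) : ℂ)
            - Complex.I * (Real.pi : ℂ) / 4) := by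
      rw [← Complex.exp_add, ← Complex.exp_add]; congr 1; rw [hΦ]; push_cast; ring
    rw [e2, ← e3, hA]
    have n1 : (‖s₁‖ : ℂ) ≠ 0 := by exact_mod_cast hspos.ne'
    have n2 : (‖G‖ : ℂ) ≠ 0 := by exact_mod_cast hGpos.ne'
    have n3 := Complex.exp_ne_zero (θ * Complex.I)
    have n4 := Complex.exp_ne_zero (-(ψ * Complex.I))
    generalize Complex.exp (θ * Complex.I) = E1 at *
    generalize Complex.exp (-(ψ * Complex.I)) = E2 at *
    push_cast
    field_simp
  have hdA : d = 2 * Complex.I * A := by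
    have : Real.sqrt L / Real.sqrt Real.pi = 2 * A := by
      rw [← Real.sqrt_div hLpos.le, Real.sqrt_eq_iff_mul_self_eq (by positivity) (by positivity),
        hLt]
      field_simp
      linear_combination (-2) * hA2
    rw [hd]
    have h' : ((Real.sqrt L : ℝ) : ℂ) / ((Real.sqrt Real.pi : ℝ) : ℂ) = 2 * A := by
      exact_mod_cast this
    linear_combination Complex.I * h'
  have harg : (((2/3) * Y : ℝ) : ℂ) - (3/4) * d ^ 2 * ((Real.log y : ℝ) : ℂ) + φ = (Φ : ℂ) := by
    rw [hφ, hd2, hΦ]; push_cast; ring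
  rw [hmain, harg, hdA, Complex.im_ofReal_mul, Complex.exp_ofReal_mul_I_im]
  push_cast
  ring
end
end
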